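/- Let C be a braided monoidal category, A an object, and s : S ↣ I a subunit. The following are equivalent: (a) s ⊗ id_A : S ⊗ A → I ⊗ A is an isomorphism; (b) there is an isomorphism S ⊗ A ≅ A; (c) there exists an object B and an isomorphism S ⊗ B ≅ A; (d) the identity morphism id_A restricts to s, i.e. id_A factors through λ_A ∘ (s ⊗ id_A) : S ⊗ A → A. -/

import Mathlib

open CategoryTheory MonoidalCategory

/-!
The objects `X` for which `s ▷ X` is invertible are closed under retracts, because `s ▷ -` is a
natural transformation, and they include every `S ⊗ B`, because up to associators `s ▷ (S ⊗ B)` is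
`(s ▷ S) ▷ B`. Both (c) and (d) exhibit `A` as a retract of some `S ⊗ B`, so each implies (a).
-/

section Retract

variable {C D : Type*} [Category C] [Category D]

theorem isIso_app_of_retract {F G : C ⥤ D} (τ : F ⟶ G) {X Y : C} (h : Retract X Y)
    [hY : IsIso (τ.app Y)] : IsIso (τ.app X) :=
  MorphismProperty.of_retract (P := .isomorphisms D) (τ.retractArrowApp h) hY

end Retract

section Whiskering

variable {C : Type*} [Category C] [MonoidalCategory C]

theorem isIso_whiskerRight_of_retract {S T X Y : C} (f : S ⟶ T) (h : Retract X Y)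
    [hY : IsIso (f ▷ Y)] : IsIso (f ▷ X) :=
  isIso_app_of_retract ((curriedTensor C).map f) h (hY := hY)

theorem isIso_whiskerRight_tensor {S T : C} (f : S ⟶ T) (X Y : C) [IsIso (f ▷ X)] :
    IsIso (f ▷ (X ⊗ Y)) := by
  rw [whiskerRight_tensor]
  infer_instance

theorem isIso_whiskerRight_of_retract_tensor {S T X Y A : C} (f : S ⟶ T) [IsIso (f ▷ X)]
    (h : Retract A (X ⊗ Y)) : IsIso (f ▷ A) :=
  have := isIso_whiskerRight_tensor f X Y
  isIso_whiskerRight_of_retract f h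

theorem stmt7_general {S : C} (s : S ⟶ 𝟙_ C) [IsIso (s ▷ S)] (A : C) :
    List.TFAE [IsIso (s ▷ A),
      Nonempty (S ⊗ A ≅ A),
      ∃ B : C, Nonempty (S ⊗ B ≅ A),
      ∃ f : A ⟶ S ⊗ A, f ≫ (s ▷ A) ≫ (λ_ A).hom = 𝟙 A] := by
  tfae_have 1 → 2 := fun _ => ⟨asIso (s ▷ A) ≪≫ λ_ A⟩
  tfae_have 2 → 3 := fun e => ⟨A, e⟩
  tfae_have 3 → 1 := fun ⟨_, ⟨e⟩⟩ => isIso_whiskerRight_of_retract_tensor s e.symm.retract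
  tfae_have 1 → 4 := fun _ => ⟨(λ_ A).inv ≫ inv (s ▷ A), by simp⟩
  tfae_have 4 → 1 := fun ⟨f, hf⟩ => isIso_whiskerRight_of_retract_tensor s ⟨f, _, hf⟩
  tfae_finish

end Whiskering

/-- Proposition 4.2 of "Tensor topology": for a subunit `s : S ↣ I` and an object `A`,
the following are equivalent: (a) `s ▷ A` is invertible; (b) `S ⊗ A ≅ A`;
(c) `S ⊗ B ≅ A` for some `B`; (d) `id_A` restricts to `s`. -/
theorem stmt7 {C : Type*} [Category C] [MonoidalCategory C] [BraidedCategory C]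
    {S A : C} (s : S ⟶ 𝟙_ C) [Mono s] (hs : IsIso (s ▷ S)) :
    (IsIso (s ▷ A) ↔ Nonempty (S ⊗ A ≅ A)) ∧
    (Nonempty (S ⊗ A ≅ A) ↔ ∃ B : C, Nonempty (S ⊗ B ≅ A)) ∧
    ((∃ B : C, Nonempty (S ⊗ B ≅ A)) ↔
      ∃ f : A ⟶ S ⊗ A, f ≫ (s ▷ A) ≫ (λ_ A).hom = 𝟙 A) := by
  have h := stmt7_general s A
  exact ⟨h.out 0 1, h.out 1 2, h.out 2 3⟩
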